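/- Let n ≥ 2 and let φ be a Young function. If Ψ : L^φ(ℝⁿ, |x|dx) → ℝⁿ is a valuation with Ψ(0) = 0, then for every l ∈ ℕ, all α₁, …, α_l ∈ ℝ, and all pairwise disjoint measurable sets M₁, …, M_l ⊆ ℝⁿ with ∫_{Mᵢ} |x| dx < ∞ for each i, one has Ψ(Σᵢ αᵢ χ_{Mᵢ}) = Σᵢ Ψ(αᵢ χ_{Mᵢ}). -/

import Mathlib

open MeasureTheory Filter Set Topology TopologicalSpace
open scoped ENNReal

noncomputable section

/-- `ℝⁿ` with the Euclidean norm. -/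
abbrev En (n : ℕ) := EuclideanSpace ℝ (Fin n)

/-- `φ : ℝ → ℝ` is a Young function (viewed as a function on `[0,∞)`):
`φ t = ∫₀ᵗ ψ(s) ds` for a non-decreasing, right-continuous `ψ` with `ψ 0 = 0`,
`ψ s > 0` for `s > 0` and `ψ s → ∞` as `s → ∞`. -/
def IsYoung (φ : ℝ → ℝ) : Prop :=
  ∃ ψ : ℝ → ℝ, (∀ s : ℝ, 0 ≤ s → 0 ≤ ψ s) ∧ MonotoneOn ψ (Set.Ici 0) ∧
    (∀ s : ℝ, 0 ≤ s → ContinuousWithinAt ψ (Set.Ici s) s) ∧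
    ψ 0 = 0 ∧ (∀ s : ℝ, 0 < s → 0 < ψ s) ∧
    Tendsto ψ atTop atTop ∧
    (∀ t : ℝ, 0 ≤ t → φ t = ∫ s in (0:ℝ)..t, ψ s)

/-- The complementary Young function `φ*(t) = sup_{s ≥ 0} (s t − φ s)`. -/
def conjYoung (φ : ℝ → ℝ) (t : ℝ) : ℝ :=
  sSup {y : ℝ | ∃ s : ℝ, 0 ≤ s ∧ y = s * t - φ s}

/-- The measure `μₙ(M) = ∫_M |x| dx`. -/
def mun {n : ℕ} (M : Set (En n)) : ℝ≥0∞ :=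
  ∫⁻ x in M, ENNReal.ofReal ‖x‖

/-- Membership in the Orlicz space `L^φ(ℝⁿ, |x|dx)`:
`h` is measurable and `∫ φ(δ|h(x)|)|x| dx < ∞` for every `δ > 0`. -/
def MemOrlicz {n : ℕ} (φ : ℝ → ℝ) (h : En n → ℝ) : Prop :=
  Measurable h ∧ ∀ δ : ℝ, 0 < δ →
    ∫⁻ x : En n, ENNReal.ofReal (φ (δ * |h x|)) * ENNReal.ofReal ‖x‖ < ⊤

/-- The Orlicz norm
`‖h‖_φ = sup { ∫ |h g| |x| dx : g measurable, ∫ φ*(|g|)|x| dx ≤ 1 }` (valued in `[0,∞]`). -/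
def orliczNorm {n : ℕ} (φ : ℝ → ℝ) (h : En n → ℝ) : ℝ≥0∞ :=
  ⨆ g ∈ {g : En n → ℝ | Measurable g ∧
      ∫⁻ x : En n, ENNReal.ofReal (conjYoung φ |g x|) * ENNReal.ofReal ‖x‖ ≤ 1},
    ∫⁻ x : En n, ENNReal.ofReal |h x * g x| * ENNReal.ofReal ‖x‖

/-- The moment vector `m(Q) = ∫_Q x dx` of a set `Q ⊆ ℝⁿ`. -/
def momentSet {n : ℕ} (Q : Set (En n)) : En n := ∫ x in Q, x

/-- The action of an `n × n` matrix on `ℝⁿ`. -/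
def matVec {n : ℕ} (ϑ : Matrix (Fin n) (Fin n) ℝ) (x : En n) : En n :=
  Matrix.toEuclideanLin ϑ x

/-- A compact convex polytope: the convex hull of a nonempty finite set. -/
def IsPolytope {n : ℕ} (Q : Set (En n)) : Prop :=
  ∃ S : Finset (En n), S.Nonempty ∧ Q = convexHull ℝ (S : Set (En n))

/-- The space of polytopes, topologized via the Hausdorff metric on nonempty
compact subsets of `ℝⁿ`. -/
abbrev PolySp (n : ℕ) := {K : NonemptyCompacts (En n) // IsPolytope (K : Set (En n))}

/-- `Y` is a valuation on polytopes. -/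
def IsPolyValuation {n : ℕ} (Y : Set (En n) → En n) : Prop :=
  ∀ Q₁ Q₂ : Set (En n), IsPolytope Q₁ → IsPolytope Q₂ → IsPolytope (Q₁ ∪ Q₂) →
    IsPolytope (Q₁ ∩ Q₂) → Y Q₁ + Y Q₂ = Y (Q₁ ∪ Q₂) + Y (Q₁ ∩ Q₂)

/-- `Y` is `SL(n)` covariant on polytopes: `Y(ϑ Q) = ϑ (Y Q)` for `det ϑ = 1`. -/
def IsPolySLCovariant {n : ℕ} (Y : Set (En n) → En n) : Prop :=
  ∀ Q : Set (En n), IsPolytope Q → ∀ ϑ : Matrix (Fin n) (Fin n) ℝ, ϑ.det = 1 →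
    Y (matVec ϑ '' Q) = matVec ϑ (Y Q)

/-- `Ψ` is a valuation on `L^φ(ℝⁿ, |x|dx)`. -/
def IsOrliczValuation {n : ℕ} (φ : ℝ → ℝ) (Ψ : (En n → ℝ) → En n) : Prop :=
  ∀ h₁ h₂ : En n → ℝ, MemOrlicz φ h₁ → MemOrlicz φ h₂ →
    Ψ (fun x => max (h₁ x) (h₂ x)) + Ψ (fun x => min (h₁ x) (h₂ x)) = Ψ h₁ + Ψ h₂

/-- `Ψ` is `SL(n)` covariant: `Ψ(h ∘ ϑ⁻¹) = ϑ (Ψ h)` for `det ϑ = 1`. -/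
def IsOrliczSLCovariant {n : ℕ} (φ : ℝ → ℝ) (Ψ : (En n → ℝ) → En n) : Prop :=
  ∀ h : En n → ℝ, MemOrlicz φ h → ∀ ϑ : Matrix (Fin n) (Fin n) ℝ, ϑ.det = 1 →
    Ψ (fun x => h (matVec ϑ⁻¹ x)) = matVec ϑ (Ψ h)

/-- `Ψ` is continuous: `Ψ(h_k) → Ψ(h)` whenever `‖h_k − h‖_φ → 0`. -/
def OrliczContinuous {n : ℕ} (φ : ℝ → ℝ) (Ψ : (En n → ℝ) → En n) : Prop :=
  ∀ (hk : ℕ → En n → ℝ) (h : En n → ℝ), (∀ k, MemOrlicz φ (hk k)) → MemOrlicz φ h →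
    Tendsto (fun k => orliczNorm φ (fun x => hk k x - h x)) atTop (𝓝 0) →
    Tendsto (fun k => Ψ (hk k)) atTop (𝓝 (Ψ h))

/-- `Ψ` identifies functions that agree almost everywhere. -/
def RespectsAE {n : ℕ} (φ : ℝ → ℝ) (Ψ : (En n → ℝ) → En n) : Prop :=
  ∀ h₁ h₂ : En n → ℝ, MemOrlicz φ h₁ → MemOrlicz φ h₂ →
    (∀ᵐ x : En n, h₁ x = h₂ x) → Ψ h₁ = Ψ h₂

/-- The `Δ₂` condition: `φ(2t) ≤ C φ(t)` for all `t ≥ T`. -/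
def SatisfiesDelta2 (φ : ℝ → ℝ) : Prop :=
  ∃ T C : ℝ, 0 ≤ T ∧ 0 < C ∧ ∀ t : ℝ, T ≤ t → φ (2 * t) ≤ C * φ t

/-- A closed cube in `ℝⁿ`: `{x : cᵢ ≤ xᵢ ≤ dᵢ}` with all side lengths equal. -/
def IsClosedCube {n : ℕ} (C : Set (En n)) : Prop :=
  ∃ c d : Fin n → ℝ, (∃ L : ℝ, 0 ≤ L ∧ ∀ i, d i - c i = L) ∧
    C = {x : En n | ∀ i, c i ≤ x i ∧ x i ≤ d i}

theorem young_zero {φ : ℝ → ℝ} (hφ : IsYoung φ) : φ 0 = 0 := by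
  obtain ⟨ψ, -, -, -, -, -, -, h⟩ := hφ
  simpa using h 0 le_rfl

theorem memOrlicz_of_sub {n : ℕ} {φ : ℝ → ℝ} (h0 : φ 0 = 0) {h k : En n → ℝ}
    (hh : MemOrlicz φ h) (hk : Measurable k) (hkh : ∀ x, k x = h x ∨ k x = 0) :
    MemOrlicz φ k := by
  refine ⟨hk, fun δ hδ => lt_of_le_of_lt (lintegral_mono fun x => ?_) (hh.2 δ hδ)⟩
  rcases hkh x with e | e
  · simp [e]
  · simp [e, h0]

theorem psi_add {n : ℕ} {φ : ℝ → ℝ} (hφ0 : φ 0 = 0) {Ψ : (En n → ℝ) → En n}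
    (hval : IsOrliczValuation φ Ψ) (h0 : Ψ (fun _ => 0) = 0) {f g : En n → ℝ}
    (hf : Measurable f) (hg : Measurable g) (hfg : ∀ x, f x = 0 ∨ g x = 0)
    (hm : MemOrlicz φ (fun x => f x + g x)) :
    Ψ (fun x => f x + g x) = Ψ f + Ψ g := by
  have mz : MemOrlicz φ (fun _ : En n => (0:ℝ)) :=
    memOrlicz_of_sub hφ0 hm measurable_const (fun x => Or.inr rfl)
  have mf : MemOrlicz φ f := memOrlicz_of_sub hφ0 hm hf
    (fun x => by rcases hfg x with e | e <;> simp [e])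
  have mg : MemOrlicz φ g := memOrlicz_of_sub hφ0 hm hg
    (fun x => by rcases hfg x with e | e <;> simp [e])
  have mp : ∀ {u : En n → ℝ}, MemOrlicz φ u → MemOrlicz φ (fun x => max (u x) 0) :=
    fun {u} hu => memOrlicz_of_sub hφ0 hu (hu.1.max measurable_const)
      (fun x => max_choice (u x) 0)
  have mn : ∀ {u : En n → ℝ}, MemOrlicz φ u → MemOrlicz φ (fun x => min (u x) 0) :=
    fun {u} hu => memOrlicz_of_sub hφ0 hu (hu.1.min measurable_const)
      (fun x => min_choice (u x) 0)
  have e1 := hval _ _ hm mz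
  have e2 := hval _ _ mf mz
  have e3 := hval _ _ mg mz
  have e4 := hval _ _ (mp mf) (mp mg)
  have e5 := hval _ _ (mn mf) (mn mg)
  have a1 : (fun x => max (max (f x) 0) (max (g x) 0)) = fun x => max (f x + g x) 0 := by
    funext x; rcases hfg x with e | e <;> simp [e]
  have a2 : (fun x => min (max (f x) 0) (max (g x) 0)) = fun x => 0 := by
    funext x; rcases hfg x with e | e <;> simp [e]
  have a3 : (fun x => max (min (f x) 0) (min (g x) 0)) = fun x => 0 := by
    funext x; rcases hfg x with e | e <;> simp [e]
  have a4 : (fun x => min (min (f x) 0) (min (g x) 0)) = fun x => min (f x + g x) 0 := by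
    funext x; rcases hfg x with e | e <;> simp [e]
  rw [a1, a2, h0, add_zero] at e4
  rw [a3, a4, h0, zero_add] at e5
  rw [h0, add_zero] at e1 e2 e3
  rw [← e1, ← e2, ← e3, e4, e5]
  abel

theorem memOrlicz_sum {n : ℕ} {φ : ℝ → ℝ} (hφ0 : φ 0 = 0) {l : ℕ} (α : Fin l → ℝ)
    (M : Fin l → Set (En n)) (hmeas : ∀ i, MeasurableSet (M i))
    (hdisj : ∀ i j, i ≠ j → Disjoint (M i) (M j))
    (hfin : ∀ i, mun (M i) < ⊤) (s : Finset (Fin l)) :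
    MemOrlicz φ (fun x => ∑ i ∈ s, (M i).indicator (fun _ => α i) x) := by
  refine ⟨Finset.measurable_sum _ fun i _ => measurable_const.indicator (hmeas i),
    fun δ hδ => ?_⟩
  have hle : ∀ x : En n, ENNReal.ofReal
      (φ (δ * |∑ i ∈ s, (M i).indicator (fun _ => α i) x|)) * ENNReal.ofReal ‖x‖ ≤
      ∑ i ∈ s, ENNReal.ofReal (φ (δ * |α i|)) *
        (M i).indicator (fun x => ENNReal.ofReal ‖x‖) x := by
    intro x
    by_cases hx : ∃ j ∈ s, x ∈ M j
    · obtain ⟨j, hj, hxj⟩ := hx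
      have : ∑ i ∈ s, (M i).indicator (fun _ => α i) x = α j := by
        rw [Finset.sum_eq_single_of_mem j hj]
        · simp [hxj]
        · intro i _ hij
          exact indicator_of_notMem
            (fun hxi => Set.disjoint_left.1 (hdisj i j hij) hxi hxj) _
      rw [this]
      refine le_trans (le_of_eq ?_) (Finset.single_le_sum
        (f := fun i => ENNReal.ofReal (φ (δ * |α i|)) *
          (M i).indicator (fun x => ENNReal.ofReal ‖x‖) x) (fun i _ => zero_le) hj)
      simp [hxj]
    · push Not at hx
      rw [Finset.sum_eq_zero fun i hi => indicator_of_notMem (hx i hi) _]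
      simp [hφ0]
  have hind : ∀ i, Measurable ((M i).indicator (fun x : En n => ENNReal.ofReal ‖x‖)) :=
    fun i => (ENNReal.measurable_ofReal.comp measurable_norm).indicator (hmeas i)
  refine lt_of_le_of_lt (lintegral_mono hle) ?_
  rw [lintegral_finsetSum _ fun i _ => (hind i).const_mul _]
  refine ENNReal.sum_lt_top.2 fun i _ => ?_
  rw [lintegral_const_mul _ (hind i), lintegral_indicator (hmeas i)]
  exact ENNReal.mul_lt_top ENNReal.ofReal_lt_top (hfin i)

/-- For `n ≥ 2` and a Young function `φ`, if `Ψ : L^φ(ℝⁿ, |x|dx) → ℝⁿ`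
is a valuation with `Ψ(0) = 0`, then for all `α₁, …, α_l ∈ ℝ` and pairwise disjoint
measurable sets `M₁, …, M_l` with `μₙ(Mᵢ) < ∞`, one has
`Ψ(Σᵢ αᵢ χ_{Mᵢ}) = Σᵢ Ψ(αᵢ χ_{Mᵢ})`. -/
theorem statement9 (n : ℕ) (hn : 2 ≤ n) (φ : ℝ → ℝ) (hφ : IsYoung φ)
    (Ψ : (En n → ℝ) → En n) (hval : IsOrliczValuation φ Ψ) (h0 : Ψ (fun _ => 0) = 0)
    (l : ℕ) (α : Fin l → ℝ) (M : Fin l → Set (En n))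
    (hmeas : ∀ i, MeasurableSet (M i))
    (hdisj : ∀ i j, i ≠ j → Disjoint (M i) (M j))
    (hfin : ∀ i, mun (M i) < ⊤) :
    Ψ (fun x => ∑ i, (M i).indicator (fun _ => α i) x) =
      ∑ i, Ψ ((M i).indicator fun _ => α i) := by
  have hφ0 := young_zero hφ
  suffices H : ∀ s : Finset (Fin l),
      Ψ (fun x => ∑ i ∈ s, (M i).indicator (fun _ => α i) x) =
        ∑ i ∈ s, Ψ ((M i).indicator fun _ => α i) from H Finset.univ
  intro s
  induction s using Finset.induction_on with
  | empty => simpa using h0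
  | insert a s ha ih =>
    have hm := memOrlicz_sum hφ0 α M hmeas hdisj hfin (insert a s)
    simp only [Finset.sum_insert ha] at hm ⊢
    rw [← ih]
    refine psi_add hφ0 hval h0 (measurable_const.indicator (hmeas a))
      (Finset.measurable_sum _ fun i _ => measurable_const.indicator (hmeas i)) ?_ hm
    intro x
    by_cases hx : x ∈ M a
    · right
      refine Finset.sum_eq_zero fun i hi => indicator_of_notMem (fun hxi => ?_) _
      have hia : i ≠ a := fun e => ha (e ▸ hi)
      exact Set.disjoint_left.1 (hdisj i a hia) hxi hx
    · left
      exact indicator_of_notMem hx _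

end
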